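/- In the network inspection game with mutually disjoint monitoring sets, the value of the game (expected number of undetected attacks at any Nash equilibrium) equals b2 - Σ_{i=1}^{b1} λ_i · min( |E_{v_i}| , (1/k*)(b2 - Σ_{j=k*+1}^n |E_{v_j}|) ). -/

import Mathlib

open Finset

/-- A sensor positioning: each sensor is placed at a node or left unused (`none`). -/
abbrev Pos (n b1 : ℕ) := Fin b1 → Option (Fin n)

/-- A positioning is valid if no two sensors occupy the same node. -/
def ValidPos {n b1 : ℕ} (s : Pos n b1) : Prop :=
  ∀ j j' : Fin b1, s j = s j' → s j ≠ none → j = j'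

/-- The components of the network, grouped by the (mutually disjoint) monitoring
sets `E_{v_i}` of sizes `c i` (0-based indexing: node `i` is `v_{i+1}`). -/
abbrev Component (n : ℕ) (c : Fin n → ℕ) := (i : Fin n) × Fin (c i)

/-- A mixed inspection strategy: a probability distribution over valid positionings. -/
def MixedInsp (n b1 : ℕ) (σ : Pos n b1 → ℝ) : Prop :=
  (∀ s, 0 ≤ σ s) ∧ (∑ s, σ s = 1) ∧ (∀ s, σ s ≠ 0 → ValidPos s)

/-- A mixed attack strategy with budget `b2`: a distribution over attack plans. -/
def MixedAtk (n b2 : ℕ) (c : Fin n → ℕ) (τ : Finset (Component n c) → ℝ) : Prop :=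
  (∀ T, 0 ≤ τ T) ∧ (∑ T, τ T = 1) ∧ (∀ T, τ T ≠ 0 → T.card ≤ b2)

/-- Detection probability of node `i` under the mixed inspection strategy `σ`. -/
noncomputable def detProb {n b1 : ℕ} (lam : Fin b1 → ℝ) (σ : Pos n b1 → ℝ) (i : Fin n) : ℝ :=
  ∑ s, σ s * ∑ j, if s j = some i then lam j else 0

/-- Total attack probability mass placed on monitoring set `i` under `τ`,
i.e. `Σ_{e ∈ E_{v_i}} p_τ(e)`. -/
noncomputable def atkProb {n : ℕ} {c : Fin n → ℕ} (τ : Finset (Component n c) → ℝ) (i : Fin n) : ℝ :=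
  ∑ T, τ T * ((T.filter (fun e => e.1 = i)).card : ℝ)

/-- Expected number of undetected attacks; with mutually disjoint monitoring sets and
independent players' randomizations it equals `Σ_i q_i (1 - p_i)`. -/
noncomputable def U {n b1 : ℕ} (c : Fin n → ℕ) (lam : Fin b1 → ℝ)
    (σ : Pos n b1 → ℝ) (τ : Finset (Component n c) → ℝ) : ℝ :=
  ∑ i, atkProb τ i * (1 - detProb lam σ i)

/-- `Σ_{j=k+1}^n |E_{v_j}|` (1-based), i.e. sum of sizes with 0-based index `≥ k`. -/
def tailZ (n : ℕ) (c : Fin n → ℕ) (k : ℕ) : ℤ :=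
  ∑ j ∈ Finset.univ.filter (fun j : Fin n => k ≤ (j : ℕ)), (c j : ℤ)

/-- `|E_{v_{k+1}}|` (1-based), with the convention `|E_{v_{n+1}}| = 0`. -/
def cext (n : ℕ) (c : Fin n → ℕ) (k : ℕ) : ℤ :=
  if h : k < n then (c ⟨k, h⟩ : ℤ) else 0

/-- `k* = min { k ∈ [n] : b2 - Σ_{j=k+1}^n |E_{v_j}| ≥ k·|E_{v_{k+1}}| }`. -/
noncomputable def kstar (n b2 : ℕ) (c : Fin n → ℕ) : ℕ :=
  sInf {k | 1 ≤ k ∧ k ≤ n ∧ (k : ℤ) * cext n c k ≤ (b2 : ℤ) - tailZ n c k}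

/-- The value formula of Theorem 1:
`b2 - Σ_{i=1}^{b1} λ_i · min(|E_{v_i}|, (1/k*)(b2 - Σ_{j=k*+1}^n |E_{v_j}|))`. -/
noncomputable def valueFormula (n b1 b2 : ℕ) (c : Fin n → ℕ) (lam : Fin b1 → ℝ) : ℝ :=
  (b2 : ℝ) - ∑ j : Fin b1, lam j *
    min ((cext n c (j : ℕ) : ℝ))
      (((b2 : ℝ) - (tailZ n c (kstar n b2 c) : ℝ)) / (kstar n b2 c))

theorem avg_sum {α : Type*} [Fintype α] [DecidableEq α] (x : ℕ → α) (k : ℕ) (F : α → ℝ) :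
    ∑ s, ((∑ r ∈ range k, if s = x r then (1:ℝ) else 0) / k) * F s
      = (∑ r ∈ range k, F (x r)) / k := by
  have : ∀ s, ((∑ r ∈ range k, if s = x r then (1:ℝ) else 0) / k) * F s
      = (∑ r ∈ range k, if s = x r then F s else 0) / k := by
    intro s
    rw [div_mul_eq_mul_div, Finset.sum_mul]
    simp
  rw [Finset.sum_congr rfl (fun s _ => this s), ← Finset.sum_div, Finset.sum_comm]
  simp

theorem avg_one {α : Type*} [Fintype α] [DecidableEq α] (x : ℕ → α) (k : ℕ) (hk : 1 ≤ k) :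
    ∑ s, ((∑ r ∈ range k, if s = x r then (1:ℝ) else 0) / k) = 1 := by
  have h := avg_sum x k (fun _ => 1)
  have hk' : (k:ℝ) ≠ 0 := by positivity
  simpa [hk'] using h

theorem avg_nonneg {α : Type*} [DecidableEq α] (x : ℕ → α) (k : ℕ) (s : α) :
    0 ≤ (∑ r ∈ range k, if s = x r then (1:ℝ) else 0) / k := by
  apply div_nonneg _ (by positivity)
  apply Finset.sum_nonneg
  intro r _
  split_ifs <;> norm_num

theorem avg_supp {α : Type*} [DecidableEq α] (x : ℕ → α) (k : ℕ) (s : α)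
    (h : (∑ r ∈ range k, if s = x r then (1:ℝ) else 0) / k ≠ 0) : ∃ r < k, s = x r := by
  by_contra! hh
  apply h
  rw [Finset.sum_eq_zero, zero_div]
  intro r hr
  rw [if_neg (hh r (Finset.mem_range.1 hr))]

theorem hermite (k x : ℕ) (hk : 1 ≤ k) : ∑ r ∈ range k, (x + r) / k = x := by
  induction x with
  | zero =>
    apply Finset.sum_eq_zero
    intro r hr
    rw [Nat.div_eq_of_lt]
    simpa using hr
  | succ x ih =>
    have h1 := Finset.sum_range_succ (fun r => (x + r) / k) k
    have h2 := Finset.sum_range_succ' (fun r => (x + r) / k) k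
    rw [Nat.add_div_right x (by omega)] at h1
    have h3 : ∑ r ∈ range k, (x + 1 + r) / k = ∑ r ∈ range k, (x + (r + 1)) / k := by
      apply Finset.sum_congr rfl
      intro r _
      congr 1
      ring
    simp only [add_zero] at h2
    omega

/-- Sum of an antitone function over a finite set is at most the sum over an initial segment. -/
theorem sum_le_initial (Q : ℕ → ℝ) (hQ : Antitone Q) (S : Finset ℕ) :
    ∑ i ∈ S, Q i ≤ ∑ i ∈ range S.card, Q i := by
  induction S using Finset.induction_on_max with
  | empty => simp
  | insert a S ha ih =>
    have hn : a ∉ S := fun h => lt_irrefl _ (ha a h)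
    rw [Finset.sum_insert hn, Finset.card_insert_of_notMem hn, Finset.sum_range_succ]
    have : S.card ≤ a := by
      have : S ⊆ range a := fun x hx => Finset.mem_range.2 (ha x hx)
      simpa using Finset.card_le_card this
    linarith [hQ this]

theorem abel_nonneg (L d : ℕ → ℝ) (hL : Antitone L) (hd : ∀ m, 0 ≤ ∑ j ∈ range m, d j) (m : ℕ) :
    L m * ∑ j ∈ range m, d j ≤ ∑ j ∈ range m, L j * d j := by
  induction m with
  | zero => simp
  | succ m ih =>
    rw [Finset.sum_range_succ (fun j => L j * d j)]
    have h1 : L (m+1) * ∑ j ∈ range (m+1), d j ≤ L m * ∑ j ∈ range (m+1), d j :=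
      mul_le_mul_of_nonneg_right (hL (Nat.le_succ m)) (hd _)
    rw [Finset.sum_range_succ d, mul_add] at h1
    rw [Finset.sum_range_succ d]
    linarith

/-- Rearrangement for partial injections. -/
theorem rearr (b : ℕ) (L Q : ℕ → ℝ) (hL : Antitone L) (hL0 : ∀ i, 0 ≤ L i)
    (hQ : Antitone Q) (hQ0 : ∀ i, 0 ≤ Q i) (f : ℕ → Option ℕ)
    (hf : ∀ j j', f j = f j' → f j ≠ none → j = j') :
    ∑ j ∈ range b, L j * ((f j).elim 0 Q) ≤ ∑ j ∈ range b, L j * Q j := by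
  have key : ∀ m, 0 ≤ ∑ j ∈ range m, (Q j - (f j).elim 0 Q) := by
    intro m
    rw [Finset.sum_sub_distrib, sub_nonneg]
    have e1 : ∑ j ∈ range m, (f j).elim 0 Q
        = ∑ j ∈ (range m).filter (fun j => f j ≠ none), (f j).elim 0 Q := by
      rw [Finset.sum_filter]
      apply Finset.sum_congr rfl
      intro j _
      by_cases h : f j = none <;> simp [h]
    have e2 : ∑ j ∈ (range m).filter (fun j => f j ≠ none), (f j).elim 0 Q
        = ∑ i ∈ ((range m).filter (fun j => f j ≠ none)).image (fun j => (f j).getD 0), Q i := by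
      rw [Finset.sum_image]
      · apply Finset.sum_congr rfl
        intro j hj
        have hj := (Finset.mem_filter.1 hj).2
        cases h : f j with
        | none => exact absurd h hj
        | some a => simp
      · intro j hj j' hj' e
        have hj := (Finset.mem_filter.1 (Finset.mem_coe.1 hj)).2
        have hj' := (Finset.mem_filter.1 (Finset.mem_coe.1 hj')).2
        apply hf _ _ _ hj
        cases h : f j with
        | none => exact absurd h hj
        | some a =>
          cases h' : f j' with
          | none => exact absurd h' hj'
          | some a' => simpa [h, h'] using e
    rw [e1, e2]
    refine (sum_le_initial Q hQ _).trans ?_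
    apply Finset.sum_le_sum_of_subset_of_nonneg
    · apply Finset.range_mono
      refine Finset.card_image_le.trans ((Finset.card_filter_le _ _).trans ?_)
      simp
    · intro i _ _
      exact hQ0 i
  have := abel_nonneg L (fun j => Q j - (f j).elim 0 Q) hL key b
  have h2 : 0 ≤ L b * ∑ j ∈ range b, (Q j - (f j).elim 0 Q) := mul_nonneg (hL0 b) (key b)
  have h3 := h2.trans this
  simp only [mul_sub, Finset.sum_sub_distrib] at h3
  linarith

/-- Zero extension of the sizes. -/
def Cx {n : ℕ} (c : Fin n → ℕ) (k : ℕ) : ℕ := if h : k < n then c ⟨k, h⟩ else 0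

/-- Zero extension of the accuracies. -/
noncomputable def Lx {b : ℕ} (lam : Fin b → ℝ) (k : ℕ) : ℝ := if h : k < b then lam ⟨k, h⟩ else 0

theorem cext_eq {n : ℕ} (c : Fin n → ℕ) (k : ℕ) : cext n c k = (Cx c k : ℤ) := by
  unfold cext Cx
  split_ifs <;> simp

theorem Cx_coe {n : ℕ} (c : Fin n → ℕ) (i : Fin n) : Cx c i = c i := by simp [Cx]

theorem Lx_coe {n : ℕ} (c : Fin n → ℝ) (i : Fin n) : Lx c i = c i := by simp [Lx]

theorem Cx_anti {n : ℕ} (c : Fin n → ℕ) (hc : Antitone c) : Antitone (Cx c) := by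
  intro a b hab
  unfold Cx
  split_ifs with h1 h2
  · exact hc (by simpa using hab)
  · omega
  · omega
  · omega

theorem Lx_anti {n : ℕ} (c : Fin n → ℝ) (hc : Antitone c) (h0 : ∀ j, 0 < c j) :
    Antitone (Lx c) := by
  intro a b hab
  unfold Lx
  split_ifs with h1 h2
  · exact hc (by simpa using hab)
  · omega
  · exact (h0 _).le
  · exact le_rfl

theorem tailZ_eq {n : ℕ} (c : Fin n → ℕ) (k : ℕ) :
    tailZ n c k = ((∑ i ∈ Finset.Ico k n, Cx c i : ℕ) : ℤ) := by
  unfold tailZ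
  have h1 : ∀ j : Fin n, (if k ≤ (j:ℕ) then (c j : ℤ) else 0)
      = (fun i : ℕ => if k ≤ i then (Cx c i : ℤ) else 0) (j:ℕ) := by
    intro j
    simp [Cx_coe]
  rw [Finset.sum_filter, Finset.sum_congr rfl (fun j _ => h1 j), ← Finset.sum_range (fun i : ℕ => if k ≤ i then (Cx c i : ℤ) else 0),
    ← Finset.sum_filter]
  push_cast
  apply Finset.sum_congr _ (fun _ _ => rfl)
  ext i
  simp
  tauto

theorem kstar_spec (n b2 : ℕ) (hn : 1 ≤ n) (c : Fin n → ℕ) (hc : Antitone c)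
    (hb2E : b2 ≤ ∑ i, c i) :
    ∃ m : ℕ, 1 ≤ kstar n b2 c ∧ kstar n b2 c ≤ n ∧
      b2 = m + ∑ i ∈ Finset.Ico (kstar n b2 c) n, Cx c i ∧
      kstar n b2 c * Cx c (kstar n b2 c) ≤ m ∧
      ∀ i < kstar n b2 c, m ≤ kstar n b2 c * Cx c i := by
  have hne : {k | 1 ≤ k ∧ k ≤ n ∧ (k : ℤ) * cext n c k ≤ (b2 : ℤ) - tailZ n c k}.Nonempty := by
    refine ⟨n, hn, le_rfl, ?_⟩
    rw [cext_eq, tailZ_eq]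
    simp [Cx]
  have hmem := Nat.sInf_mem hne
  have hmin : ∀ k < kstar n b2 c, ¬ (1 ≤ k ∧ k ≤ n ∧
      (k : ℤ) * cext n c k ≤ (b2 : ℤ) - tailZ n c k) :=
    fun k hk => Nat.notMem_of_lt_sInf hk
  change 1 ≤ kstar n b2 c ∧ kstar n b2 c ≤ n ∧ (kstar n b2 c : ℤ) * cext n c (kstar n b2 c)
    ≤ (b2 : ℤ) - tailZ n c (kstar n b2 c) at hmem
  generalize kstar n b2 c = k at *
  obtain ⟨h1, h2, h3⟩ := hmem
  rw [cext_eq, tailZ_eq] at h3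
  have h3' : k * Cx c k + ∑ i ∈ Finset.Ico k n, Cx c i ≤ b2 := by
    zify
    push_cast at h3
    linarith
  refine ⟨b2 - ∑ i ∈ Finset.Ico k n, Cx c i, h1, h2, by omega, by omega, ?_⟩
  obtain ⟨l, rfl⟩ : ∃ l, k = l + 1 := ⟨k - 1, by omega⟩
  have hs := Finset.sum_eq_sum_Ico_succ_bot (show l < n by omega) (Cx c)
  suffices b2 - ∑ i ∈ Finset.Ico (l+1) n, Cx c i ≤ (l+1) * Cx c l by
    intro i hi
    refine this.trans (Nat.mul_le_mul_left _ (Cx_anti c hc (by omega)))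
  rcases Nat.eq_zero_or_pos l with rfl | hl
  · have : ∑ i, c i = ∑ i ∈ Finset.Ico 0 n, Cx c i := by
      rw [← Finset.range_eq_Ico, Finset.sum_range]
      simp [Cx_coe]
    omega
  · have := hmin l (by omega)
    rw [cext_eq, tailZ_eq] at this
    have h5 : ¬ ((l:ℤ) * (Cx c l : ℤ) ≤ (b2:ℤ) - ((∑ i ∈ Finset.Ico l n, Cx c i : ℕ) : ℤ)) :=
      fun h => this ⟨hl, by omega, h⟩
    rw [add_mul, one_mul]
    have h6 : ¬ (((l * Cx c l : ℕ) : ℤ) ≤ (b2:ℤ) - ((∑ i ∈ Finset.Ico l n, Cx c i : ℕ) : ℤ)) := by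
      push_cast at h5 ⊢
      exact h5
    omega

theorem sum_split {n k : ℕ} (hk : k ≤ n) (f g : ℕ → ℝ) :
    ∑ i ∈ range n, (if i < k then f i else g i)
      = ∑ i ∈ range k, f i + ∑ i ∈ Finset.Ico k n, g i := by
  rw [← Finset.sum_range_add_sum_Ico _ hk]
  congr 1
  · apply Finset.sum_congr rfl
    intro i hi
    rw [if_pos (Finset.mem_range.1 hi)]
  · apply Finset.sum_congr rfl
    intro i hi
    rw [if_neg (by have := (Finset.mem_Ico.1 hi).1; omega)]

theorem value_eq (n b1 b2 k m : ℕ) (hb1n : b1 ≤ n) (c : Fin n → ℕ) (hc : Antitone c)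
    (lam : Fin b1 → ℝ) (hk : 1 ≤ k) (hkn : k ≤ n) (hkk : kstar n b2 c = k)
    (hb : b2 = m + ∑ i ∈ Finset.Ico k n, Cx c i) :
    valueFormula n b1 b2 c lam
      = b2 - ∑ j ∈ range b1, Lx lam j * min (Cx c j : ℝ) (m / k) := by
  unfold valueFormula
  rw [hkk, tailZ_eq, Finset.sum_range]
  congr 1
  apply Finset.sum_congr rfl
  intro j _
  rw [Lx_coe, cext_eq, hb]
  push_cast
  simp

theorem min_eq (n k m : ℕ) (c : Fin n → ℕ) (hc : Antitone c) (hk : 1 ≤ k)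
    (h1 : k * Cx c k ≤ m) (h2 : ∀ i < k, m ≤ k * Cx c i) (i : ℕ) :
    min (Cx c i : ℝ) (m / k) = if i < k then (m:ℝ) / k else Cx c i := by
  have hk' : (0:ℝ) < k := by exact_mod_cast hk
  split_ifs with h
  · apply min_eq_right
    rw [div_le_iff₀ hk']
    have := h2 i h
    rw [mul_comm] at this
    exact_mod_cast this
  · apply min_eq_left
    rw [le_div_iff₀ hk']
    have h3 : Cx c i ≤ Cx c k := Cx_anti c hc (by omega)
    have : Cx c i * k ≤ m := by nlinarith
    exact_mod_cast this

theorem atk_bounds {n b2 : ℕ} {c : Fin n → ℕ} {τ : Finset (Component n c) → ℝ}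
    (h : MixedAtk n b2 c τ) :
    (∀ i, 0 ≤ atkProb τ i) ∧ (∀ i, atkProb τ i ≤ c i) ∧ ∑ i, atkProb τ i ≤ b2 := by
  obtain ⟨h0, h1, h2⟩ := h
  refine ⟨fun i => Finset.sum_nonneg fun T _ => mul_nonneg (h0 T) (by positivity), ?_, ?_⟩
  · intro i
    unfold atkProb
    have hb : ∀ T : Finset (Component n c), (T.filter (fun e => e.1 = i)).card ≤ c i := by
      intro T
      have : T.filter (fun e => e.1 = i) ⊆ (Finset.univ : Finset (Fin (c i))).image
          (fun x => (⟨i, x⟩ : Component n c)) := by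
        rintro ⟨a, x⟩ he
        have := (Finset.mem_filter.1 he).2
        simp only at this
        subst this
        simp
      refine (Finset.card_le_card this).trans (Finset.card_image_le.trans ?_)
      simp
    calc ∑ T, τ T * ((T.filter (fun e => e.1 = i)).card : ℝ) ≤ ∑ T, τ T * (c i : ℝ) := by
          apply Finset.sum_le_sum
          intro T _
          exact mul_le_mul_of_nonneg_left (by exact_mod_cast hb T) (h0 T)
      _ = c i := by rw [← Finset.sum_mul, h1, one_mul]
  · unfold atkProb
    rw [Finset.sum_comm]
    calc ∑ T, ∑ i, τ T * ((T.filter (fun e => e.1 = i)).card : ℝ) ≤ ∑ T, τ T * (b2 : ℝ) := by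
          apply Finset.sum_le_sum
          intro T _
          rw [← Finset.mul_sum]
          have : ∑ i, ((T.filter (fun e => e.1 = i)).card : ℝ) = T.card := by
            have := Finset.card_eq_sum_card_fiberwise (s := T) (t := Finset.univ)
              (f := fun e => e.1) (fun _ _ => by simp)
            rw [this]
            push_cast
            rfl
          rw [this]
          by_cases hT : τ T = 0
          · simp [hT]
          · exact mul_le_mul_of_nonneg_left (by exact_mod_cast h2 T hT) (h0 T)
      _ = b2 := by rw [← Finset.sum_mul, h1, one_mul]

/-- Rotation by `r` of the first `k` naturals. -/
def rot (k r j : ℕ) : ℕ := if j < k then (if j + r < k then j + r else j + r - k) else j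

theorem exists_insp (n b1 k : ℕ) (hb1n : b1 ≤ n) (lam : Fin b1 → ℝ) (hk : 1 ≤ k) (hkn : k ≤ n) :
    ∃ σ : Pos n b1 → ℝ, MixedInsp n b1 σ ∧ ∀ i : Fin n,
      detProb lam σ i = if (i:ℕ) < k then (∑ j ∈ range k, Lx lam j) / k else Lx lam i := by
  have hk' : (k:ℝ) ≠ 0 := by positivity
  have hrot : ∀ r : ℕ, r < k → ∀ j < n, rot k r j < n := by
    intro r hr j hj
    unfold rot
    split_ifs <;> omega
  let x : ℕ → Pos n b1 := fun r j =>
    if h : rot k r j < n then some ⟨rot k r j, h⟩ else none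
  have hx : ∀ r < k, ∀ j : Fin b1, ∀ i : Fin n, x r j = some i ↔ rot k r j = i := by
    intro r hr j i
    have := hrot r hr j (by omega)
    simp [x, this, Fin.ext_iff]
  refine ⟨fun s => (∑ r ∈ range k, if s = x r then (1:ℝ) else 0) / k,
    ⟨avg_nonneg x k, avg_one x k hk, ?_⟩, ?_⟩
  · intro s hs
    obtain ⟨r, hr, rfl⟩ := avg_supp x k s hs
    intro j j' e hne
    obtain ⟨i, hi⟩ := Option.ne_none_iff_exists'.1 hne
    have e1 := (hx r hr j i).1 hi
    have e2 := (hx r hr j' i).1 (e ▸ hi)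
    apply Fin.ext
    unfold rot at e1 e2
    split_ifs at e1 e2 <;> omega
  · intro i
    unfold detProb
    rw [avg_sum x k (fun s => ∑ j, if s j = some i then lam j else 0)]
    have h1 : ∑ r ∈ range k, ∑ j, (if x r j = some i then lam j else 0)
        = ∑ r ∈ range k, ∑ j ∈ range n, (if rot k r j = i then Lx lam j else 0) := by
      apply Finset.sum_congr rfl
      intro r hr
      rw [← Finset.sum_subset (Finset.range_mono hb1n), Finset.sum_range]
      · apply Finset.sum_congr rfl
        intro j _
        simp only [hx r (Finset.mem_range.1 hr) j i, Lx_coe]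
      · intro j _ hj
        have : ¬ j < b1 := by simpa using hj
        simp [Lx, this]
    rw [h1, Finset.sum_comm]
    split_ifs with hi
    · congr 1
      have h2 : ∀ j ∈ range n, (∑ r ∈ range k, if rot k r j = i then Lx lam j else 0)
          = if j < k then Lx lam j else 0 := by
        intro j _
        split_ifs with hj
        · rw [Finset.sum_eq_single_of_mem (if j ≤ (i:ℕ) then (i:ℕ) - j else (i:ℕ) + k - j)]
          · rw [if_pos]
            unfold rot
            split_ifs <;> omega
          · rw [Finset.mem_range]
            split_ifs <;> omega
          · intro r hr hne
            have := Finset.mem_range.1 hr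
            rw [if_neg]
            intro h
            apply hne
            unfold rot at h
            split_ifs at h ⊢ <;> omega
        · apply Finset.sum_eq_zero
          intro r _
          rw [if_neg]
          unfold rot
          split_ifs
          omega
      rw [Finset.sum_congr rfl h2, sum_split hkn]
      simp
    · have h2 : ∀ j ∈ range n, (∑ r ∈ range k, if rot k r j = i then Lx lam j else 0)
          = if j = i then k * Lx lam i else 0 := by
        intro j _
        split_ifs with hj
        · subst hj
          simp [rot, hi]
        · apply Finset.sum_eq_zero
          intro r hr
          have := Finset.mem_range.1 hr
          rw [if_neg]
          unfold rot
          split_ifs <;> omega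
      rw [Finset.sum_congr rfl h2, Finset.sum_ite_eq' (range n) (i:ℕ), if_pos (by simp)]
      field_simp

/-- Number of attacks on node `i` in the `r`-th plan. -/
def cnt {n : ℕ} (c : Fin n → ℕ) (k m r i : ℕ) : ℕ :=
  if i < k then ((i + 1) * m + r) / k - (i * m + r) / k else Cx c i

theorem card_plan {n : ℕ} (c : Fin n → ℕ) (a : ℕ → ℕ) (ha : ∀ i : Fin n, a i ≤ c i) (i : Fin n) :
    ((((Finset.univ : Finset (Component n c)).filter
      (fun e => (e.2 : ℕ) < a e.1)).filter (fun e => e.1 = i)).card) = a i := by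
  have : ((Finset.univ : Finset (Component n c)).filter
      (fun e => (e.2 : ℕ) < a e.1)).filter (fun e => e.1 = i)
      = (Finset.univ : Finset (Fin (a i))).image
        (fun x : Fin (a i) => (⟨i, ⟨(x : ℕ), x.2.trans_le (ha i)⟩⟩ : Component n c)) := by
    ext ⟨j, y⟩
    simp only [Finset.mem_filter, Finset.mem_univ, true_and, Finset.mem_image]
    constructor
    · rintro ⟨h1, rfl⟩
      exact ⟨⟨y, h1⟩, rfl⟩
    · rintro ⟨z, hz⟩
      cases hz
      exact ⟨z.2, rfl⟩
  rw [this, Finset.card_image_of_injective]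
  · simp
  · intro z z' h
    simp only [Sigma.mk.injEq, heq_eq_eq, true_and, Fin.mk.injEq] at h
    exact Fin.ext h

theorem exists_atk (n b2 k m : ℕ) (c : Fin n → ℕ) (hk : 1 ≤ k) (hkn : k ≤ n)
    (hb : b2 = m + ∑ i ∈ Finset.Ico k n, Cx c i) (h2 : ∀ i < k, m ≤ k * Cx c i) :
    ∃ τ : Finset (Component n c) → ℝ, MixedAtk n b2 c τ ∧ ∀ i : Fin n,
      atkProb τ i = if (i:ℕ) < k then (m:ℝ) / k else Cx c i := by
  have hk' : (k:ℝ) ≠ 0 := by positivity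
  have hmono : ∀ r, Monotone (fun i => (i * m + r) / k) := by
    intro r a b hab
    apply Nat.div_le_div_right
    have := Nat.mul_le_mul_right m hab
    omega
  have hle : ∀ r, ∀ i : Fin n, cnt c k m r i ≤ c i := by
    intro r i
    unfold cnt
    split_ifs with h
    · have h3 := h2 i h
      have h4 : (((i:ℕ) + 1) * m + r) / k ≤ ((i * m + r) + k * Cx c i) / k := by
        apply Nat.div_le_div_right
        rw [add_mul]
        omega
      rw [Nat.add_mul_div_left _ _ (by omega)] at h4
      rw [Cx_coe] at h4
      omega
    · rw [Cx_coe]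
  let x : ℕ → Finset (Component n c) := fun r =>
    (Finset.univ : Finset (Component n c)).filter (fun e => (e.2 : ℕ) < cnt c k m r e.1)
  have hx : ∀ r, ∀ i : Fin n, ((x r).filter (fun e => e.1 = i)).card = cnt c k m r i :=
    fun r i => card_plan c (cnt c k m r) (hle r) i
  have hcard : ∀ r < k, (x r).card = b2 := by
    intro r hr
    have h3 := Finset.card_eq_sum_card_fiberwise (s := x r) (t := Finset.univ)
              (f := fun e => e.1) (fun _ _ => by simp)
    rw [h3, Finset.sum_congr rfl (fun i _ => hx r i), ← Finset.sum_range (cnt c k m r),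
      ← Finset.sum_range_add_sum_Ico _ hkn, hb]
    congr 1
    · have h4 : ∀ i ∈ range k, cnt c k m r i
          = (fun i => (i * m + r) / k) (i+1) - (fun i => (i * m + r) / k) i := by
        intro i hi
        simp [cnt, Finset.mem_range.1 hi]
      rw [Finset.sum_congr rfl h4, Finset.sum_range_tsub (hmono r)]
      simp only [zero_mul, zero_add]
      rw [Nat.mul_add_div (by omega)]
      omega
    · apply Finset.sum_congr rfl
      intro i hi
      have := (Finset.mem_Ico.1 hi).1
      simp [cnt, this]
  refine ⟨fun s => (∑ r ∈ range k, if s = x r then (1:ℝ) else 0) / k,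
    ⟨avg_nonneg x k, avg_one x k hk, ?_⟩, ?_⟩
  · intro s hs
    obtain ⟨r, hr, rfl⟩ := avg_supp x k s hs
    exact (hcard r hr).le
  · intro i
    unfold atkProb
    rw [avg_sum x k (fun T => ((T.filter (fun e => e.1 = i)).card : ℝ))]
    simp only [hx]
    unfold cnt
    split_ifs with h
    · congr 1
      have h3 : ∀ r ∈ range k, (((((i:ℕ) + 1) * m + r) / k - (i * m + r) / k : ℕ) : ℝ)
          = ((((i:ℕ) + 1) * m + r) / k : ℕ) - ((i * m + r) / k : ℕ) := by
        intro r _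
        rw [Nat.cast_sub (hmono r (Nat.le_succ (i:ℕ)))]
      rw [Finset.sum_congr rfl h3, Finset.sum_sub_distrib, ← Nat.cast_sum, ← Nat.cast_sum,
        hermite k _ hk, hermite k _ hk]
      push_cast
      ring
    · simp
      field_simp

theorem det_bound {n b1 : ℕ} (lam : Fin b1 → ℝ) (hlam : Antitone lam) (h0 : ∀ j, 0 < lam j)
    (Q : ℕ → ℝ) (hQ : Antitone Q) (hQ0 : ∀ i, 0 ≤ Q i)
    (σ : Pos n b1 → ℝ) (hσ : MixedInsp n b1 σ) :
    ∑ i : Fin n, Q i * detProb lam σ i ≤ ∑ j ∈ range b1, Lx lam j * Q j := by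
  obtain ⟨g0, g1, g2⟩ := hσ
  have hL0 : ∀ i, 0 ≤ Lx lam i := by
    intro i
    unfold Lx
    split_ifs
    · exact (h0 _).le
    · exact le_rfl
  have hs : ∀ s : Pos n b1, ValidPos s →
      ∑ j, lam j * (s j).elim 0 (fun i => Q i) ≤ ∑ j ∈ range b1, Lx lam j * Q j := by
    intro s hv
    let f : ℕ → Option ℕ := fun j => if h : j < b1 then (s ⟨j, h⟩).map Fin.val else none
    have hf : ∀ j j', f j = f j' → f j ≠ none → j = j' := by
      intro j j' e hne
      by_cases h : j < b1
      · by_cases h' : j' < b1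
        · simp only [f, h, h', dif_pos] at e hne
          have e' := Option.map_injective Fin.val_injective e
          have := hv ⟨j, h⟩ ⟨j', h'⟩ e' (by simpa using hne)
          simpa using this
        · simp only [f, h', dif_neg, not_false_eq_true] at e
          exact absurd e hne
      · simp [f, h] at hne
    refine le_trans (le_of_eq ?_) (rearr b1 (Lx lam) Q (Lx_anti lam hlam h0) hL0 hQ hQ0 f hf)
    rw [Finset.sum_range]
    apply Finset.sum_congr rfl
    intro j _
    rw [Lx_coe]
    simp only [f, j.2, dif_pos, Fin.eta]
    cases s j <;> simp
  have e1 : ∑ i : Fin n, Q i * detProb lam σ i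
      = ∑ s, σ s * ∑ j, lam j * (s j).elim 0 (fun i => Q i) := by
    unfold detProb
    simp only [Finset.mul_sum]
    rw [Finset.sum_comm]
    apply Finset.sum_congr rfl
    intro s _
    rw [Finset.sum_comm]
    apply Finset.sum_congr rfl
    intro j _
    cases h : s j with
    | none => simp
    | some a =>
      simp only [Option.some.injEq, Option.elim_some, mul_ite, mul_zero]
      rw [Finset.sum_ite_eq]
      simp
      ring
  rw [e1]
  calc _ ≤ ∑ s, σ s * ∑ j ∈ range b1, Lx lam j * Q j := by
        apply Finset.sum_le_sum
        intro s _
        by_cases h : σ s = 0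
        · simp [h]
        · exact mul_le_mul_of_nonneg_left (hs s (g2 s h)) (g0 s)
    _ = _ := by rw [← Finset.sum_mul, g1, one_mul]

/-- **Theorem 1, value.** With mutually disjoint monitoring sets, the value
of the game — the expected number of undetected attacks at any Nash equilibrium — equals
`b2 - Σ_{i=1}^{b1} λ_i · min(|E_{v_i}|, (1/k*)(b2 - Σ_{j=k*+1}^n |E_{v_j}|))`. -/
theorem disjoint_game_value (n b1 b2 : ℕ) (hn : 1 ≤ n) (hb1n : b1 ≤ n)
    (c : Fin n → ℕ) (hc : Antitone c) (hcpos : ∀ i, 1 ≤ c i)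
    (lam : Fin b1 → ℝ) (hlam : Antitone lam) (hlam01 : ∀ j, 0 < lam j ∧ lam j ≤ 1)
    (hb2 : 1 ≤ b2) (hb2E : b2 ≤ ∑ i, c i)
    (σs : Pos n b1 → ℝ) (τs : Finset (Component n c) → ℝ)
    (hσs : MixedInsp n b1 σs) (hτs : MixedAtk n b2 c τs)
    (hNE1 : ∀ τ, MixedAtk n b2 c τ → U c lam σs τ ≤ U c lam σs τs)
    (hNE2 : ∀ σ, MixedInsp n b1 σ → U c lam σs τs ≤ U c lam σ τs) :
    U c lam σs τs = valueFormula n b1 b2 c lam := by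
  obtain ⟨m, hk, hkn, hb, hm1, hm2⟩ := kstar_spec n b2 hn c hc hb2E
  rw [value_eq n b1 b2 _ m hb1n c hc lam hk hkn rfl hb]
  generalize kstar n b2 c = k at *
  have hk0 : (0:ℝ) < k := by exact_mod_cast hk
  have hLa := Lx_anti lam hlam (fun j => (hlam01 j).1)
  have hL1 : ∀ i, Lx lam i ≤ 1 := by
    intro i
    unfold Lx
    split_ifs
    · exact (hlam01 _).2
    · norm_num
  have hmin := min_eq n k m c hc hk hm1 hm2
  have hbR : (b2:ℝ) = m + ∑ i ∈ Finset.Ico k n, (Cx c i : ℝ) := by exact_mod_cast hb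
  apply le_antisymm
  · obtain ⟨σ, hσ, hdet⟩ := exists_insp n b1 k hb1n lam hk hkn
    refine (hNE2 σ hσ).trans ?_
    obtain ⟨q0, qc, qb⟩ := atk_bounds hτs
    unfold U
    set P := (∑ j ∈ range k, Lx lam j) / k with hP
    have hP1 : P ≤ 1 := by
      rw [hP, div_le_one hk0]
      calc _ ≤ ∑ j ∈ range k, (1:ℝ) := Finset.sum_le_sum fun j _ => hL1 j
        _ = k := by simp
    have hPL : ∀ i, k ≤ i → Lx lam i ≤ P := by
      intro i hi
      rw [hP, le_div_iff₀ hk0]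
      calc _ = ∑ j ∈ range k, Lx lam i := by simp [mul_comm]
        _ ≤ _ := Finset.sum_le_sum fun j hj => hLa (by have := Finset.mem_range.1 hj; omega)
    have hPp : ∀ i, 0 ≤ P - detProb lam σ i := by
      intro i
      rw [hdet]
      split_ifs with h
      · simp
      · linarith [hPL i (by omega)]
    have s1 : ∑ i, atkProb τs i * (1 - detProb lam σ i)
        = (1 - P) * ∑ i, atkProb τs i + ∑ i, atkProb τs i * (P - detProb lam σ i) := by
      rw [Finset.mul_sum, ← Finset.sum_add_distrib]
      apply Finset.sum_congr rfl
      intro i _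
      ring
    have s2 : ∑ i, atkProb τs i * (P - detProb lam σ i)
        ≤ ∑ i, (c i : ℝ) * (P - detProb lam σ i) :=
      Finset.sum_le_sum fun i _ => mul_le_mul_of_nonneg_right (qc i) (hPp i)
    have s3 : ∑ i, (c i : ℝ) * (P - detProb lam σ i)
        = ∑ i ∈ Finset.Ico k n, (Cx c i : ℝ) * (P - Lx lam i) := by
      have : ∀ i : Fin n, (c i : ℝ) * (P - detProb lam σ i)
          = (fun i : ℕ => if i < k then (0:ℝ) else (Cx c i : ℝ) * (P - Lx lam i)) (i:ℕ) := by
        intro i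
        simp only [hdet, Cx_coe]
        split_ifs <;> simp
      rw [Finset.sum_congr rfl (fun i _ => this i), ← Finset.sum_range
        (fun i : ℕ => if i < k then (0:ℝ) else (Cx c i : ℝ) * (P - Lx lam i)), sum_split hkn]
      simp
    have s4 : ∑ j ∈ range b1, Lx lam j * min (Cx c j : ℝ) (m / k)
        = P * m + ∑ i ∈ Finset.Ico k n, (Cx c i : ℝ) * Lx lam i := by
      rw [Finset.sum_subset (Finset.range_mono hb1n)]
      · have : ∀ j ∈ range n, Lx lam j * min (Cx c j : ℝ) (m / k)
            = if j < k then Lx lam j * (m / k) else (Cx c j : ℝ) * Lx lam j := by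
          intro j _
          rw [hmin]
          split_ifs
          · rfl
          · ring
        rw [Finset.sum_congr rfl this, sum_split hkn, ← Finset.sum_mul, hP]
        ring
      · intro j _ hj
        have : ¬ j < b1 := by simpa using hj
        simp [Lx, this]
    have s5 : (1 - P) * ∑ i, atkProb τs i ≤ (1 - P) * b2 :=
      mul_le_mul_of_nonneg_left qb (by linarith)
    have s6 : ∑ i ∈ Finset.Ico k n, (Cx c i : ℝ) * (P - Lx lam i)
        = P * ∑ i ∈ Finset.Ico k n, (Cx c i : ℝ)
          - ∑ i ∈ Finset.Ico k n, (Cx c i : ℝ) * Lx lam i := by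
      rw [Finset.mul_sum, ← Finset.sum_sub_distrib]
      apply Finset.sum_congr rfl
      intro i _
      ring
    have s7 : (1 - P) * (b2:ℝ) = b2 - P * m - P * ∑ i ∈ Finset.Ico k n, (Cx c i : ℝ) := by
      rw [hbR]
      ring
    linarith
  · obtain ⟨τ, hτ, hatk⟩ := exists_atk n b2 k m c hk hkn hb hm2
    refine le_trans ?_ (hNE1 τ hτ)
    have hQ : Antitone (fun i : ℕ => min (Cx c i : ℝ) (m / k)) := by
      intro a b hab
      exact min_le_min_right _ (by exact_mod_cast Cx_anti c hc hab)
    have hd := det_bound (n := n) lam hlam (fun j => (hlam01 j).1) _ hQ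
      (fun i => le_min (by positivity) (by positivity)) σs hσs
    have e1 : ∑ i : Fin n, min (Cx c i : ℝ) (m / k) = b2 := by
      rw [← Finset.sum_range (fun i : ℕ => min (Cx c i : ℝ) (m / k)),
        Finset.sum_congr rfl (fun i _ => hmin i), sum_split hkn, hbR]
      simp
      field_simp
    have e2 : U c lam σs τ = ∑ i : Fin n, min (Cx c i : ℝ) (m / k)
        - ∑ i : Fin n, min (Cx c i : ℝ) (m / k) * detProb lam σs i := by
      unfold U
      rw [← Finset.sum_sub_distrib]
      apply Finset.sum_congr rfl
      intro i _
      rw [hatk, hmin]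
      ring
    rw [e2, e1]
    linarith
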